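/- If machine costs are powers of 2 and some type is less cost-efficient per job than the next smaller type, that type is never needed: suppose c_k = 2^k for all k, capacities B_k are strictly increasing, and for some fixed k one has 2^k/B_k < 2^{k+1}/B_{k+1} (equivalently B_{k+1} < 2·B_k). Then for every valid schedule S of an instance J there is a valid schedule S′ of J with cost(S′) ≤ cost(S) that contains no batch of type k+1. -/

import Mathlib

structure SchedInstance where
  jobs : Finset ℕ
  r : ℕ → ℤ
  d : ℕ → ℤ
  window : ∀ j ∈ jobs, r j ≤ d j

structure Batch where
  btype : ℕ
  time : ℤ
  bjobs : Finset ℕ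
deriving DecidableEq

def ValidSchedule (B : ℕ → ℕ) (P : SchedInstance) (S : Finset Batch) : Prop :=
  (∀ X ∈ S, X.bjobs.card ≤ B X.btype) ∧
  (∀ X ∈ S, ∀ j ∈ X.bjobs, j ∈ P.jobs ∧ P.r j ≤ X.time ∧ X.time ≤ P.d j) ∧
  (∀ X ∈ S, ∀ Y ∈ S, X ≠ Y → Disjoint X.bjobs Y.bjobs) ∧
  (∀ j ∈ P.jobs, ∃ X ∈ S, j ∈ X.bjobs)

noncomputable def schedCost (c : ℕ → ℝ) (S : Finset Batch) : ℝ :=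
  ∑ X ∈ S, c X.btype

theorem schedCost_nonneg {c : ℕ → ℝ} (hc : ∀ t, 0 ≤ c t) (S : Finset Batch) :
    0 ≤ schedCost c S :=
  Finset.sum_nonneg fun X _ => hc X.btype

theorem schedCost_union_le {c : ℕ → ℝ} (hc : ∀ t, 0 ≤ c t) (S T : Finset Batch) :
    schedCost c (S ∪ T) ≤ schedCost c S + schedCost c T := by
  have h : schedCost c (S ∪ T) + schedCost c (S ∩ T) = schedCost c S + schedCost c T :=
    Finset.sum_union_inter
  linarith [schedCost_nonneg hc (S ∩ T)]

theorem schedCost_biUnion_le {c : ℕ → ℝ} (hc : ∀ t, 0 ≤ c t) (S : Finset Batch)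
    (f : Batch → Finset Batch) :
    schedCost c (S.biUnion f) ≤ ∑ X ∈ S, schedCost c (f X) := by
  induction S using Finset.induction_on with
  | empty => simp [schedCost]
  | insert X S hX ih =>
    rw [Finset.biUnion_insert, Finset.sum_insert hX]
    linarith [schedCost_union_le hc (f X) (S.biUnion f)]

/-- `F` splits the batch `X` into capacity-respecting batches run at the same time. -/
structure IsBatchSplit (B : ℕ → ℕ) (X : Batch) (F : Finset Batch) : Prop where
  card_le : ∀ Y ∈ F, Y.bjobs.card ≤ B Y.btype
  time_eq : ∀ Y ∈ F, Y.time = X.time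
  subset : ∀ Y ∈ F, Y.bjobs ⊆ X.bjobs
  disjoint : ∀ Y ∈ F, ∀ Z ∈ F, Y ≠ Z → Disjoint Y.bjobs Z.bjobs
  cover : ∀ j ∈ X.bjobs, ∃ Y ∈ F, j ∈ Y.bjobs

theorem ValidSchedule.biUnion_split {B : ℕ → ℕ} {P : SchedInstance} {S : Finset Batch}
    (hS : ValidSchedule B P S) {f : Batch → Finset Batch}
    (hf : ∀ X ∈ S, IsBatchSplit B X (f X)) : ValidSchedule B P (S.biUnion f) := by
  obtain ⟨-, hwin, hdisj, hcov⟩ := hS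
  refine ⟨fun Y hY => ?_, fun Y hY j hj => ?_, fun Y hY Z hZ hYZ => ?_, fun j hj => ?_⟩
  · obtain ⟨X, hX, hYX⟩ := Finset.mem_biUnion.1 hY
    exact (hf X hX).card_le Y hYX
  · obtain ⟨X, hX, hYX⟩ := Finset.mem_biUnion.1 hY
    rw [(hf X hX).time_eq Y hYX]
    exact hwin X hX j ((hf X hX).subset Y hYX hj)
  · obtain ⟨X, hX, hYX⟩ := Finset.mem_biUnion.1 hY
    obtain ⟨W, hW, hZW⟩ := Finset.mem_biUnion.1 hZ
    by_cases hXW : X = W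
    · subst hXW
      exact (hf X hX).disjoint Y hYX Z hZW hYZ
    · exact (hdisj X hX W hW hXW).mono ((hf X hX).subset Y hYX) ((hf W hW).subset Z hZW)
  · obtain ⟨X, hX, hjX⟩ := hcov j hj
    obtain ⟨Y, hY, hjY⟩ := (hf X hX).cover j hjX
    exact ⟨Y, Finset.mem_biUnion.2 ⟨X, hX, hY⟩, hjY⟩

theorem isBatchSplit_singleton {B : ℕ → ℕ} {X : Batch} (hX : X.bjobs.card ≤ B X.btype) :
    IsBatchSplit B X {X} := by
  constructor <;> simp [hX]

theorem exists_isBatchSplit_pair {B : ℕ → ℕ} {X : Batch} {k : ℕ}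
    (hX : X.bjobs.card ≤ 2 * B k) :
    ∃ A C : Finset ℕ, IsBatchSplit B X {⟨k, X.time, A⟩, ⟨k, X.time, C⟩} := by
  obtain ⟨A, hAX, hA⟩ := Finset.exists_subset_card_eq (Nat.min_le_right (B k) X.bjobs.card)
  have hC : (X.bjobs \ A).card ≤ B k := by
    rw [Finset.card_sdiff_of_subset hAX]
    omega
  refine ⟨A, X.bjobs \ A, ?_, ?_, ?_, ?_, ?_⟩
  · simp [hA, hC]
  · simp
  · simp [hAX]
  · simp [Finset.disjoint_sdiff, Finset.sdiff_disjoint]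
  · intro j hj
    by_cases hjA : j ∈ A <;> simp [hj, hjA]

/-- with costs `c k = 2 ^ k` and strictly increasing capacities, if type
`k+1` is strictly less cost-efficient per job than type `k`
(`2^k / B k < 2^(k+1) / B (k+1)`), then any valid schedule can be replaced by one of
no larger cost that uses no batch of type `k + 1`. -/
theorem inefficient_type_never_needed
    (B : ℕ → ℕ) (hB1 : ∀ k', 1 ≤ B k') (hBmono : StrictMono B)
    (k : ℕ)
    (hineff : (2 : ℚ) ^ k / (B k : ℚ) < (2 : ℚ) ^ (k + 1) / (B (k + 1) : ℚ))
    (P : SchedInstance) (S : Finset Batch) (hS : ValidSchedule B P S) :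
    ∃ S' : Finset Batch, ValidSchedule B P S' ∧
      schedCost (fun k' => (2 : ℝ) ^ k') S' ≤ schedCost (fun k' => (2 : ℝ) ^ k') S ∧
      ∀ X ∈ S', X.btype ≠ k + 1 := by
  have hcap : B (k + 1) ≤ 2 * B k := by
    have hk : (0 : ℚ) < B k := by exact_mod_cast hB1 k
    have hk1 : (0 : ℚ) < B (k + 1) := by exact_mod_cast hB1 (k + 1)
    rw [div_lt_div_iff₀ hk hk1, pow_succ, mul_assoc] at hineff
    have h := lt_of_mul_lt_mul_left hineff (by positivity)
    exact_mod_cast h.le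
  have hsplit : ∀ X : Batch, ∃ F : Finset Batch, X ∈ S → IsBatchSplit B X F ∧
      schedCost (fun k' => (2 : ℝ) ^ k') F ≤ 2 ^ X.btype ∧ ∀ Y ∈ F, Y.btype ≠ k + 1 := by
    intro X
    by_cases hXk : X.btype = k + 1
    · by_cases hX : X ∈ S
      · have hcard : X.bjobs.card ≤ 2 * B k := (hXk ▸ hS.1 X hX).trans hcap
        obtain ⟨A, C, hAC⟩ := exists_isBatchSplit_pair hcard
        refine ⟨_, fun _ => ⟨hAC, ?_, by simp⟩⟩
        refine (schedCost_union_le (fun t => by positivity) {_} {_}).trans ?_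
        simp only [schedCost, Finset.sum_singleton, hXk, pow_succ]
        linarith
      · exact ⟨∅, fun h => absurd h hX⟩
    · exact ⟨{X}, fun hX => ⟨isBatchSplit_singleton (hS.1 X hX), by simp [schedCost],
        by simpa using hXk⟩⟩
  choose f hf using hsplit
  refine ⟨S.biUnion f, hS.biUnion_split fun X hX => (hf X hX).1, ?_, fun Y hY => ?_⟩
  · exact (schedCost_biUnion_le (fun t => by positivity) S f).trans
      (Finset.sum_le_sum fun X hX => (hf X hX).2.1)
  · obtain ⟨X, hX, hYX⟩ := Finset.mem_biUnion.1 hY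
    exact (hf X hX).2.2 Y hYX
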